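/- Let P be an uncountable partially ordered set and let Ď(P) be the set of downward subsets of P, equipped with the POTS topology of the partial order ⊆ on Ď(P). Then Ď(P) is not second-countable; indeed, for any basis 𝓑 of this topology, the map assigning to each p ∈ P a basic set B_p ∈ 𝓑 with p^≤ ∈ B_p ⊆ {A ∈ Ď(P) : p ∈ A} is injective, so |𝓑| ≥ |P|. -/

import Mathlib

/-- The POTS topology on a preordered set `S`: generated by the subbasis
`{{r | ¬ r ≤ s} : s ∈ S} ∪ {{r | ¬ s ≤ r} : s ∈ S}`. -/
def potsTopology (S : Type*) [Preorder S] : TopologicalSpace S :=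
  TopologicalSpace.generateFrom
    ({U | ∃ s : S, U = {r : S | ¬ r ≤ s}} ∪ {U | ∃ s : S, U = {r : S | ¬ s ≤ r}})

/-- `Ď(P)`: the set of downward (lower) subsets of `P`. -/
def DCheck (P : Type*) [Preorder P] : Type _ := {A : Set P // IsLowerSet A}

/-- `Ď(P)` is partially ordered by inclusion. -/
instance {P : Type*} [Preorder P] : PartialOrder (DCheck P) :=
  Subtype.partialOrder _

/-- `Ď(P)` carries the POTS topology of `⊆`. -/
instance {P : Type*} [Preorder P] : TopologicalSpace (DCheck P) :=
  potsTopology (DCheck P)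

theorem dCheck_isOpen_mem {P : Type*} [PartialOrder P] (p : P) :
    IsOpen {A : DCheck P | p ∈ A.val} := by
  have hl : IsLowerSet {q : P | ¬ p ≤ q} := fun a b hba ha hpb => ha (le_trans hpb hba)
  apply TopologicalSpace.isOpen_generateFrom_of_mem
  left
  refine ⟨⟨{q : P | ¬ p ≤ q}, hl⟩, ?_⟩
  ext A
  constructor
  · intro hA hle
    exact (show A.val ⊆ {q : P | ¬ p ≤ q} from hle) hA le_rfl
  · intro hA
    by_contra hp
    apply hA
    change A.val ⊆ {q : P | ¬ p ≤ q}
    intro q hq hpq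
    exact hp (A.property hpq hq)

theorem dCheck_injective {P : Type*} [PartialOrder P] (B : P → Set (DCheck P))
    (h : ∀ p : P, (⟨Set.Iic p, isLowerSet_Iic p⟩ : DCheck P) ∈ B p ∧
      B p ⊆ {A : DCheck P | p ∈ A.val}) : Function.Injective B := by
  intro p q hpq
  apply le_antisymm
  · exact (h p).2 (hpq ▸ (h q).1)
  · exact (h q).2 (hpq ▸ (h p).1)

theorem dCheck_card_le {P : Type*} [PartialOrder P] (𝓑 : Set (Set (DCheck P)))
    (h𝓑 : TopologicalSpace.IsTopologicalBasis 𝓑) : Cardinal.mk P ≤ Cardinal.mk 𝓑 := by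
  have hex : ∀ p : P, ∃ b ∈ 𝓑, (⟨Set.Iic p, isLowerSet_Iic p⟩ : DCheck P) ∈ b ∧
      b ⊆ {A : DCheck P | p ∈ A.val} := fun p =>
    h𝓑.exists_subset_of_mem_open (show p ∈ Set.Iic p from le_rfl) (dCheck_isOpen_mem p)
  choose B hB h using hex
  have hinj := dCheck_injective B h
  exact Cardinal.mk_le_of_injective (f := fun p => (⟨B p, hB p⟩ : 𝓑))
    fun p q hpq => hinj (congrArg Subtype.val hpq)

/-- For uncountable `P`, `Ď(P)` is not second-countable; indeed any assignment
`p ↦ B p` of basic sets with `p^≤ ∈ B p ⊆ {A ∈ Ď(P) : p ∈ A}` taken from a basis `𝓑`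
is injective, so `|𝓑| ≥ |P|`. -/
theorem dCheck_not_secondCountable_of_uncountable (P : Type*) [PartialOrder P]
    (hP : ¬ Countable P) :
    ¬ SecondCountableTopology (DCheck P) ∧
      ∀ 𝓑 : Set (Set (DCheck P)), TopologicalSpace.IsTopologicalBasis 𝓑 →
        (∀ B : P → Set (DCheck P),
          (∀ p : P, B p ∈ 𝓑 ∧
            (⟨Set.Iic p, isLowerSet_Iic p⟩ : DCheck P) ∈ B p ∧
            B p ⊆ {A : DCheck P | p ∈ A.val}) →
          Function.Injective B) ∧
        Cardinal.mk P ≤ Cardinal.mk 𝓑 := by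
  refine ⟨fun hsc => hP ?_, fun 𝓑 h𝓑 =>
    ⟨fun B h => dCheck_injective B fun p => (h p).2, dCheck_card_le 𝓑 h𝓑⟩⟩
  obtain ⟨b, hbc, -, hb⟩ := TopologicalSpace.exists_countable_basis (DCheck P)
  rw [← Cardinal.mk_le_aleph0_iff]
  exact (dCheck_card_le b hb).trans (Cardinal.mk_le_aleph0_iff.mpr hbc.to_subtype)
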